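/- arXiv:1308.6678 — 3 statements merged into one kernel-verified Lean document; each statement's English description precedes it below -/
import Mathlib

section
/- If G is a triangle-free gap-critical graph, then every connected component of G is factor-critical. -/
/-!
A matching of `G` is encoded as an involution `f` of the vertex set that moves each vertex to
itself or to a neighbour; the fixed points are the unmatched vertices, so maximum matchings are
the involutions with fewest fixed points.

In a triangle-free graph a clique has at most two vertices, so `θ(G)` is the least number of
orbits `(|V| + |Fix f|) / 2` of such an involution. Deleting a vertex does not increase `α`, so
gap-criticality forces `θ(G - v) < θ(G)` for every `v`; an optimal clique cover of `G - v`
together with `{v}` then yields a maximum matching of `G` missing `v`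
(`exists_isMax_fix`). Thus every vertex is missed by some maximum matching.

The rest is Gallai's lemma. Say that `u ∼ v` if no maximum matching misses both, or `u = v`.
Adjacent vertices are related, and the relation is transitive when every vertex is missed by some
maximum matching (`IsMax.trans`): otherwise let `M` be a maximum matching missing `u` and `v`,
and `N` one missing the middle vertex `t`, chosen to agree with `M` as much as possible; an exchange
along an edge of `M` at a vertex `x ≠ t` missed by `N` increases the agreement. Hence reachable
vertices are related, and a maximum matching missing `v` is perfect on the rest of the component
of `v`.
-/

open SimpleGraph

/-- A set of vertices is independent (stable) if no two of its vertices are adjacent. -/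
def SimpleGraph.IsStableSet {V : Type*} (G : SimpleGraph V) (s : Set V) : Prop :=
  s.Pairwise fun a b => ¬ G.Adj a b

/-- `θ(G)`: the minimum number of cliques needed to cover all vertices of `G`. -/
noncomputable def SimpleGraph.cliqueCoverNum {V : Type*} (G : SimpleGraph V) : ℕ :=
  sInf {n | ∃ C : Finset (Finset V), C.card = n ∧ (∀ s ∈ C, G.IsClique (s : Set V)) ∧
    ∀ v : V, ∃ s ∈ C, v ∈ s}

/-- `α(G)`: the maximum size of a stable (independent) set of `G`. -/
noncomputable def SimpleGraph.stableNum {V : Type*} (G : SimpleGraph V) : ℕ :=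
  sSup {n | ∃ s : Finset V, G.IsStableSet (s : Set V) ∧ s.card = n}

/-- `gap(G) = θ(G) - α(G)`. -/
noncomputable def SimpleGraph.gap {V : Type*} (G : SimpleGraph V) : ℤ :=
  (G.cliqueCoverNum : ℤ) - (G.stableNum : ℤ)

/-- A graph is gap-critical if deleting any vertex strictly decreases the gap. -/
def SimpleGraph.IsGapCritical {V : Type*} (G : SimpleGraph V) : Prop :=
  ∀ v : V, (G.induce {w | w ≠ v}).gap < G.gap

/-- A graph is factor-critical if deleting any single vertex yields a graph
with a perfect matching. -/
def SimpleGraph.IsFactorCritical {W : Type*} (H : SimpleGraph W) : Prop :=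
  ∀ v : W, ∃ M : (H.induce {w | w ≠ v}).Subgraph, M.IsPerfectMatching

namespace GapCritical

variable {V : Type*}

/-- A matching of `G`, encoded as the involution exchanging the two ends of each matching edge
and fixing the unmatched vertices. -/
def IsMatch (G : SimpleGraph V) (f : V → V) : Prop :=
  (∀ x, f (f x) = x) ∧ ∀ x, f x ≠ x → G.Adj x (f x)

open Classical in
/-- The set of vertices missed by the matching `f`. -/
noncomputable def fixSet [Fintype V] (f : V → V) : Finset V := Finset.univ.filter fun x => f x = x

/-- A maximum matching: one missing as few vertices as possible. -/
def IsMax [Fintype V] (G : SimpleGraph V) (f : V → V) : Prop :=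
  IsMatch G f ∧ ∀ g, IsMatch G g → (fixSet f).card ≤ (fixSet g).card

lemma mem_fixSet [Fintype V] {f : V → V} {x : V} : x ∈ fixSet f ↔ f x = x := by
  simp [fixSet]

/-- If the fibres of `c` are the orbits `{x, f x}` of an involution, then counting each vertex
once and each fixed point once more counts every fibre twice. -/
lemma card_add_fix [Fintype V] {β : Type*} [DecidableEq β] (f : V → V) (c : V → β) (hf : ∀ x, f (f x) = x)
    (hc : ∀ x y, c x = c y ↔ y = x ∨ y = f x) :
    Fintype.card V + (fixSet f).card = 2 * (Finset.univ.image c).card := by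
  classical
  have h1 := Finset.card_eq_sum_card_image c (Finset.univ : Finset V)
  have h2 := Finset.card_eq_sum_card_fiberwise (f := c) (s := fixSet f)
    (t := Finset.univ.image c) (fun x _ => by simp)
  rw [← Finset.card_univ, h1, h2, ← Finset.sum_add_distrib, mul_comm, ← smul_eq_mul,
    ← Finset.sum_const]
  refine Finset.sum_congr rfl fun b hb => ?_
  obtain ⟨x, -, rfl⟩ := Finset.mem_image.1 hb
  have e1 : (Finset.univ.filter fun y => c y = c x) = {x, f x} := by
    ext y
    rw [Finset.mem_filter, eq_comm (a := c y), hc]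
    simp
  have e2 : ((fixSet f).filter fun y => c y = c x) = if f x = x then {x} else ∅ := by
    ext y
    rw [Finset.mem_filter, mem_fixSet, eq_comm (a := c y), hc]
    have := hf x
    split_ifs <;> grind
  rw [e1, e2]
  split_ifs with h
  · simp [h]
  · rw [Finset.card_pair (Ne.symm h)]; simp

/-- The edges and the missed vertices of a matching form a clique cover. -/
lemma cliqueCoverNum_le [Fintype V] {G : SimpleGraph V} {g : V → V} (hg : IsMatch G g) :
    2 * G.cliqueCoverNum ≤ Fintype.card V + (fixSet g).card := by
  classical
  have key := card_add_fix g (fun x => ({x, g x} : Finset V)) hg.1 (fun x y => by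
    have h1 := hg.1 x
    have h2 := hg.1 y
    constructor
    · intro h
      have : y ∈ ({x, g x} : Finset V) := by rw [h]; simp
      simpa using this
    · rintro (rfl | rfl)
      · rfl
      · rw [h1, Finset.pair_comm])
  rw [key]
  refine Nat.mul_le_mul_left 2 (Nat.sInf_le ⟨_, rfl, ?_, fun v => ⟨{v, g v}, by simp, by simp⟩⟩)
  intro s hs
  obtain ⟨x, -, rfl⟩ := Finset.mem_image.1 hs
  have h2 := hg.2 x
  intro a ha b hb hab
  simp only [Finset.coe_insert, Finset.coe_singleton, Set.mem_insert_iff,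
    Set.mem_singleton_iff] at ha hb
  rcases ha with rfl | rfl <;> rcases hb with rfl | rfl
  · exact absurd rfl hab
  · exact h2 (Ne.symm hab)
  · exact (h2 hab).symm
  · exact absurd rfl hab

/-- In a triangle-free graph, the classes of a partition into cliques are the orbits of a
matching. -/
lemma exists_match {G : SimpleGraph V} (htf : G.CliqueFree 3) {β : Type*} (c : V → β)
    (hc : ∀ x y, c x = c y → x ≠ y → G.Adj x y) :
    ∃ f, IsMatch G f ∧ ∀ x y, c x = c y ↔ y = x ∨ y = f x := by
  classical
  have tri : ∀ x y z, c x = c y → c x = c z → x ≠ y → x ≠ z → y = z := by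
    intro x y z h1 h2 h3 h4
    by_contra h5
    exact htf {x, y, z} (SimpleGraph.is3Clique_triple_iff.2
      ⟨hc _ _ h1 h3, hc _ _ h2 h4, hc _ _ (h1.symm.trans h2) h5⟩)
  have hex : ∀ x, ∃ y, c x = c y ∧ ((∃ z, z ≠ x ∧ c x = c z) → y ≠ x) := by
    intro x
    by_cases h : ∃ z, z ≠ x ∧ c x = c z
    · obtain ⟨z, hz, hz'⟩ := h
      exact ⟨z, hz', fun _ => hz⟩
    · exact ⟨x, rfl, fun h' => absurd h' h⟩
  choose f hf hf' using hex
  refine ⟨f, ⟨fun x => ?_, fun x hx => hc _ _ (hf x) (Ne.symm hx)⟩, fun x y => ⟨fun h => ?_, ?_⟩⟩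
  · by_cases hx : f x = x
    · rw [hx, hx]
    · exact tri (f x) _ _ (hf _) (hf x).symm (Ne.symm (hf' _ ⟨x, Ne.symm hx, (hf x).symm⟩)) hx
  · by_cases hxy : y = x
    · exact Or.inl hxy
    · exact Or.inr (tri x _ _ h (hf x) (Ne.symm hxy) (Ne.symm (hf' x ⟨y, hxy, h⟩)))
  · rintro (rfl | rfl)
    · rfl
    · exact hf x

lemma stableNum_induce_le [Fintype V] (G : SimpleGraph V) (s : Set V) :
    (G.induce s).stableNum ≤ G.stableNum := by
  refine csSup_le_csSup ⟨Fintype.card V, ?_⟩ ⟨0, ∅, by simp [SimpleGraph.IsStableSet]⟩ ?_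
  · rintro n ⟨t, -, rfl⟩
    exact Finset.card_le_univ t
  · rintro n ⟨t, ht, rfl⟩
    refine ⟨t.map (Function.Embedding.subtype _), ?_, Finset.card_map _⟩
    intro a ha b hb hab
    simp only [Finset.coe_map, Set.mem_image, Finset.mem_coe] at ha hb
    obtain ⟨a, ha, rfl⟩ := ha
    obtain ⟨b, hb, rfl⟩ := hb
    exact ht ha hb (fun h => hab (by rw [h]))

lemma exists_cover [Fintype V] (G : SimpleGraph V) :
    ∃ C : Finset (Finset V), C.card = G.cliqueCoverNum ∧
      (∀ s ∈ C, G.IsClique (s : Set V)) ∧ ∀ v : V, ∃ s ∈ C, v ∈ s := by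
  classical
  refine Nat.sInf_mem (s := {n | ∃ C : Finset (Finset V), C.card = n ∧
    (∀ s ∈ C, G.IsClique (s : Set V)) ∧ ∀ v : V, ∃ s ∈ C, v ∈ s})
    ⟨_, Finset.univ.image fun x => {x}, rfl, ?_, fun v => ⟨{v}, by simp, by simp⟩⟩
  intro s hs
  obtain ⟨x, -, rfl⟩ := Finset.mem_image.1 hs
  simp

/-- In a triangle-free gap-critical graph every vertex is missed by some maximum matching. -/
lemma exists_isMax_fix [Fintype V] {G : SimpleGraph V} (htf : G.CliqueFree 3)
    (hG : G.IsGapCritical) (v : V) : ∃ f, IsMax G f ∧ f v = v := by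
  classical
  have hlt : (G.induce {w | w ≠ v}).cliqueCoverNum < G.cliqueCoverNum := by
    have h1 := hG v
    have h2 := stableNum_induce_le G {w | w ≠ v}
    unfold SimpleGraph.gap at h1
    omega
  obtain ⟨C, hCcard, hC, hcov⟩ := exists_cover (G.induce {w | w ≠ v})
  choose k hkC hk using hcov
  -- `v` forms a class of its own, labelled `none`
  let c : V → Option (Finset {w | w ≠ v}) := fun x => if h : x ≠ v then some (k ⟨x, h⟩) else none
  have hcv : ∀ x, c v = c x → x = v := by
    intro x h
    by_contra hx
    simp [c, hx] at h
  obtain ⟨f, hf, hcf⟩ := exists_match htf c (by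
    intro x y h hxy
    by_cases hx : x = v
    · subst hx
      exact absurd (hcv _ h).symm hxy
    by_cases hy : y = v
    · subst hy
      exact absurd (hcv _ h.symm) hxy
    simp only [c, ne_eq, hx, hy, not_false_eq_true, dite_true, Option.some.injEq] at h
    have := hC _ (hkC ⟨x, hx⟩) (hk ⟨x, hx⟩) (by rw [h]; exact hk ⟨y, hy⟩)
      (fun e => hxy (congrArg Subtype.val e))
    exact this)
  refine ⟨f, ⟨hf, fun g hg => ?_⟩, hcv _ ((hcf v (f v)).2 (Or.inr rfl))⟩
  have h1 := card_add_fix f c hf.1 hcf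
  have h2 := cliqueCoverNum_le hg
  have h3 : (Finset.univ.image c).card ≤ C.card + 1 := by
    rw [← Finset.card_insertNone]
    refine Finset.card_le_card fun b hb => ?_
    obtain ⟨x, -, rfl⟩ := Finset.mem_image.1 hb
    by_cases hx : x = v
    · simp [c, hx]
    · simpa [c, hx] using hkC ⟨x, hx⟩
  omega

/-- The exchange along an edge: the matching `N` loses its edge at `y` and gains the edge `xy`. -/
lemma IsMatch.exchange {G : SimpleGraph V} [DecidableEq V] {N : V → V} (hN : IsMatch G N)
    {x y : V} (hxy : G.Adj x y) (hx : N x = x) :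
    IsMatch G fun w => if w = x then y else if w = y then x else if w = N y then w else N w := by
  have hne := hxy.ne
  constructor
  · intro w
    have := hN.1 w
    have := hN.1 y
    grind
  · intro w hw
    have := hN.2 w
    have := hxy.symm
    grind

lemma IsMax.eq_of_adj [Fintype V] {G : SimpleGraph V} {M : V → V} (hM : IsMax G M) {u v : V}
    (h : G.Adj u v) (hu : M u = u) : M v ≠ v := by
  classical
  intro hv
  have h1 := hM.2 _ (hM.1.exchange h hu)
  have hne := h.ne
  refine absurd h1 (not_le.2 (Finset.card_lt_card (Finset.ssubset_iff_of_subset ?_ |>.2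
    ⟨u, mem_fixSet.2 hu, ?_⟩)))
  · intro w
    simp only [mem_fixSet]
    grind
  · simp only [mem_fixSet]
    grind

/-- The transitivity step of Gallai's lemma: if no maximum matching misses both `u` and `t`, nor
both `t` and `v`, and some maximum matching misses `t`, then none misses both `u` and `v`. -/
lemma IsMax.trans [Fintype V] {G : SimpleGraph V} {u t v : V} (huv : u ≠ v)
    (ht : ∃ N, IsMax G N ∧ N t = t)
    (h1 : ∀ N, IsMax G N → N t = t → N u ≠ u) (h2 : ∀ N, IsMax G N → N t = t → N v ≠ v)
    {M : V → V} (hM : IsMax G M) (hu : M u = u) : M v ≠ v := by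
  classical
  intro hv
  -- choose `N` missing `t` with the largest agreement with `M`
  obtain ⟨N, hN, hmax⟩ := Set.exists_max_image {N | IsMax G N ∧ N t = t}
    (fun N => (Finset.univ.filter fun w => M w = N w).card) (Set.toFinite _) ht
  obtain ⟨hN, hNt⟩ := hN
  have hcard : (fixSet M).card = (fixSet N).card := le_antisymm (hM.2 _ hN.1) (hN.2 _ hM.1)
  have hMu := h1 N hN hNt
  have hMv := h2 N hN hNt
  -- `M` misses `u` and `v`, which `N` covers, so `N` misses two vertices covered by `M`
  have hlt : 1 < (fixSet N \ fixSet M).card := by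
    rw [← Finset.card_sdiff_comm hcard]
    exact Finset.one_lt_card.2 ⟨u, by simp [mem_fixSet, *], v, by simp [mem_fixSet, *], huv⟩
  obtain ⟨x, hx, hxt⟩ := Finset.exists_mem_ne hlt t
  rw [Finset.mem_sdiff, mem_fixSet, mem_fixSet] at hx
  obtain ⟨hNx, hMx⟩ := hx
  have hadj := hM.1.2 x hMx
  have hNy : N (M x) ≠ M x := hN.eq_of_adj hadj hNx
  have hyt : M x ≠ t := fun h => hNy (by rw [h, hNt])
  set y := M x with hy
  have hMy : M y = x := hM.1.1 x
  have hNN := hN.1.1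
  have hMM := hM.1.1
  have hne := hadj.ne
  set N' : V → V := fun w => if w = x then y else if w = y then x else
    if w = N y then w else N w with hN'
  have hmatch : IsMatch G N' := hN.1.exchange hadj hNx
  -- compared with `N`, the matching `N'` covers `x` and misses the former partner of `y`
  have hfix : fixSet N' = insert (N y) ((fixSet N).erase x) := by
    ext w
    have := hNN w
    have := hNN y
    simp only [mem_fixSet, Finset.mem_insert, Finset.mem_erase, hN']
    grind
  have hle : (fixSet N').card ≤ (fixSet N).card := by
    rw [hfix]
    refine (Finset.card_insert_le _ _).trans ?_
    rw [Finset.card_erase_add_one (mem_fixSet.2 hNx)]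
  have hN'max : IsMax G N' := ⟨hmatch, fun g hg => hle.trans (hN.2 g hg)⟩
  have hN't : N' t = t := by
    have := hNN y
    simp only [hN']
    grind
  refine absurd (hmax N' ⟨hN'max, hN't⟩) (not_le.2 (Finset.card_lt_card
    (Finset.ssubset_iff_of_subset ?_ |>.2 ⟨x, ?_, ?_⟩)))
  · intro w
    have := hNN y
    have := hMM w
    simp only [Finset.mem_filter, Finset.mem_univ, true_and, hN']
    grind
  · simp [hN', ← hy]
  · rw [Finset.mem_filter, hNx]
    exact fun h => hMx h.2

/-- If every vertex is missed by some maximum matching, then a maximum matching misses at most one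
vertex of each connected component. -/
lemma eq_of_reachable [Fintype V] {G : SimpleGraph V} (h : ∀ v, ∃ f, IsMax G f ∧ f v = v)
    {u v : V} (huv : G.Reachable u v) :
    ∀ M, IsMax G M → M u = u → M v = v → u = v := by
  obtain ⟨p⟩ := huv
  induction p with
  | nil => intros; rfl
  | @cons u t v hadj p ih =>
    intro M hM hu hv
    by_contra hne
    by_cases htv : t = v
    · subst htv
      exact hM.eq_of_adj hadj hu hv
    · exact IsMax.trans hne (h t) (fun N hN => hN.eq_of_adj hadj.symm)
        (fun N hN h1 h2 => htv (ih N hN h1 h2)) hM hu hv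

end GapCritical

/-- If `G` is a triangle-free gap-critical graph, then every connected component of `G`
is factor-critical. -/
theorem triangleFree_gapCritical_components_factorCritical {V : Type*} [Fintype V]
    (G : SimpleGraph V) (htf : G.CliqueFree 3) (hG : G.IsGapCritical) :
    ∀ c : G.ConnectedComponent, (G.induce c.supp).IsFactorCritical := by
  intro c v
  have hall := GapCritical.exists_isMax_fix htf hG
  obtain ⟨N, hN, hNv⟩ := hall v
  have hcov : ∀ w ∈ c.supp, w ≠ v → N w ≠ w := by
    intro w hw hwv h
    exact hwv (GapCritical.eq_of_reachable hall (SimpleGraph.ConnectedComponent.exact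
      ((show G.connectedComponentMk w = c from hw).trans v.2.symm)) N hN h hNv)
  refine ⟨{ verts := Set.univ
            Adj := fun a b => N a = b
            adj_sub := ?_
            edge_vert := fun _ => Set.mem_univ _
            symm := ?_ }, ?_, fun _ => Set.mem_univ _⟩
  · intro a b hab
    have hav : (a.1.1 : V) ≠ v := fun h => a.2 (Subtype.ext h)
    have := hN.1.2 a (hcov a a.1.2 hav)
    rw [hab] at this
    exact this
  · exact ⟨fun a b hab => by rw [← hab, hN.1.1]⟩
  · intro a _
    have hav : (a.1.1 : V) ≠ v := fun h => a.2 (Subtype.ext h)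
    have hadj := hN.1.2 a (hcov a a.1.2 hav)
    have hmem : N a ∈ c.supp :=
      (SimpleGraph.ConnectedComponent.sound hadj.symm.reachable).trans a.1.2
    have hne : N a ≠ v := fun h => hav (by rw [← hN.1.1 a, h, hNv])
    exact ⟨⟨⟨N a, hmem⟩, fun h => hne (congrArg Subtype.val h)⟩, rfl,
      fun b hb => Subtype.ext (Subtype.ext (Eq.symm hb))⟩
end

section
/- A connected graph G contains no subdivision of the paw as an induced subgraph if and only if G is a cycle, or a complete multipartite graph with at least 2 parts, or a tree. -/
/-!
The forward direction looks at a shortest cycle `C` of a connected graph `G` that is not a tree; a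
shortest cycle has no chords (`chordless_of_min`). Let `n` be its length.

If `n ≥ 5`, a vertex off `C` with a neighbour on `C` has exactly one, since a second one would
close off a cycle shorter than `C` (`unique_nbr`). Together with `C` such a vertex induces a
subdivided paw, so `C` spans the connected graph `G` and `G` is a cycle (`iso_of_long_girth`).

If `n ≤ 4`, then `C` is a triangle or an induced four-cycle, hence induces a complete multipartite
graph. Take a maximal vertex set `S` that induces a complete multipartite graph and contains a
triangle or an induced four-cycle. If `v` lies outside `S` and has a neighbour in `S`, the absence
of an induced paw, and of a four-cycle with a pendant vertex, forces the non-neighbours of `v` in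
`S` to be stable (`nonnbrs_stable`) and to be a union of parts (`nonnbrs_closed`). So
`S ∪ {v}` still induces a complete multipartite graph (`multi_insert`), against maximality. Hence
`S` is the whole vertex set (`multi_univ`).

Conversely, a subdivided paw has a vertex of degree three, has an edge with a vertex adjacent to
neither of its ends, and contains a cycle; the first is impossible inside a cycle graph, the second
inside a complete multipartite graph and the third inside a tree.
-/

open SimpleGraph

/-- A subdivision of the paw, with cycle of length `n + 3` and pendant path on `m + 1`
vertices attached (by an edge) to a vertex of the cycle. -/
def pawSubdivision (n m : ℕ) : SimpleGraph (Fin (n + 3) ⊕ Fin (m + 1)) :=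
  SimpleGraph.fromRel (fun x y =>
    (∃ i j, x = Sum.inl i ∧ y = Sum.inl j ∧ (cycleGraph (n + 3)).Adj i j) ∨
    (∃ i j, x = Sum.inr i ∧ y = Sum.inr j ∧ (pathGraph (m + 1)).Adj i j) ∨
    (x = Sum.inl 0 ∧ y = Sum.inr 0))

namespace PawProof

variable {V : Type*} {G : SimpleGraph V}

/-! ### Adjacency in cycles and in subdivided paws -/

lemma cycleGraph_adj_iff (n : ℕ) (i j : Fin (n + 3)) :
    (cycleGraph (n + 3)).Adj i j ↔
      (j.val = i.val + 1 ∨ i.val = j.val + 1 ∨ (i.val = 0 ∧ j.val = n + 2) ∨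
        (j.val = 0 ∧ i.val = n + 2)) := by
  have key : ∀ a b : Fin (n + 3), (a - b).val = 1 ↔
      (a.val = b.val + 1 ∨ (a.val = 0 ∧ b.val = n + 2)) := by
    intro a b
    have ha := a.isLt
    have hb := b.isLt
    rw [Fin.val_sub]
    by_cases hab : b.val ≤ a.val
    · have h1 : n + 3 - b.val + a.val = (a.val - b.val) + (n + 3) := by omega
      rw [h1, Nat.add_mod_right, Nat.mod_eq_of_lt (by omega)]
      omega
    · rw [Nat.mod_eq_of_lt (by omega)]
      omega
  rw [cycleGraph_adj', key, key]
  omega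

lemma paw_inl_inl {n m : ℕ} (i j : Fin (n + 3)) :
    (pawSubdivision n m).Adj (.inl i) (.inl j) ↔ (cycleGraph (n + 3)).Adj i j := by
  simp only [pawSubdivision, SimpleGraph.fromRel_adj]
  constructor
  · rintro ⟨-, h⟩
    have := fun h => (cycleGraph (n + 3)).adj_symm (u := j) (v := i) h
    aesop
  · intro h
    exact ⟨by simpa using h.ne, by simp [h]⟩

lemma paw_inl_inr {n m : ℕ} (i : Fin (n + 3)) (j : Fin (m + 1)) :
    (pawSubdivision n m).Adj (.inl i) (.inr j) ↔ i = 0 ∧ j = 0 := by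
  simp [pawSubdivision, SimpleGraph.fromRel_adj]

/-- `c 0, …, c (n - 1)` are the vertices, in cyclic order, of a (not necessarily induced) cycle
of length `n ≥ 3`. The values of `c` from `n` on are irrelevant. -/
def IsCyc (G : SimpleGraph V) (n : ℕ) (c : ℕ → V) : Prop :=
  3 ≤ n ∧ (∀ i j, i < n → j < n → c i = c j → i = j) ∧
    (∀ i, i + 1 < n → G.Adj (c i) (c (i + 1))) ∧ G.Adj (c (n - 1)) (c 0)

/-- The cyclic sequence `c 0, …, c (n - 1)` has no chords. -/
def Chordless (G : SimpleGraph V) (n : ℕ) (c : ℕ → V) : Prop :=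
  ∀ i j, i < j → j < n → G.Adj (c i) (c j) → j = i + 1 ∨ (i = 0 ∧ j + 1 = n)

lemma adj_iff {n : ℕ} {c : ℕ → V} (hc : IsCyc G (n + 3) c) (hi : Chordless G (n + 3) c)
    (i j : Fin (n + 3)) : G.Adj (c i) (c j) ↔ (cycleGraph (n + 3)).Adj i j := by
  obtain ⟨-, -, hs, hl⟩ := hc
  have hl' : G.Adj (c (n + 2)) (c 0) := hl
  rw [cycleGraph_adj_iff]
  constructor
  · intro h
    rcases lt_trichotomy i.val j.val with hij | hij | hij
    · have := hi _ _ hij j.isLt h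
      omega
    · rw [hij] at h
      exact (h.ne rfl).elim
    · have := hi _ _ hij i.isLt h.symm
      omega
  · rintro (h | h | ⟨h, h'⟩ | ⟨h, h'⟩)
    · rw [h]
      exact hs _ (by omega)
    · rw [h]
      exact (hs _ (by omega)).symm
    · rw [h, h']
      exact hl'.symm
    · rw [h, h']
      exact hl'

/-- A chordless cycle and a vertex off it whose only neighbour on the cycle is `c 0` induce a
subdivision of the paw whose pendant path is a single edge. -/
lemma paw_of_cyc {n : ℕ} {c : ℕ → V} (hc : IsCyc G (n + 3) c) (hi : Chordless G (n + 3) c)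
    (v : V) (hv : ∀ i < n + 3, v ≠ c i) (h0 : G.Adj v (c 0))
    (hn : ∀ i, 0 < i → i < n + 3 → ¬ G.Adj v (c i)) :
    Nonempty (pawSubdivision n 0 ↪g G) := by
  have hinl : ∀ i : Fin (n + 3), G.Adj (c i) v ↔ i = 0 := by
    intro i
    constructor
    · intro h
      by_contra hne
      exact hn i (Nat.pos_of_ne_zero fun h => hne (Fin.ext h)) i.isLt h.symm
    · rintro rfl
      exact h0.symm
  refine ⟨⟨⟨Sum.elim (fun i => c i) (fun _ => v), ?_⟩, ?_⟩⟩
  · rintro (i | i) (j | j) h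
    · exact congrArg _ (Fin.ext (hc.2.1 _ _ i.isLt j.isLt h))
    · exact (hv i i.isLt h.symm).elim
    · exact (hv j j.isLt h).elim
    · exact congrArg _ (Subsingleton.elim (α := Fin 1) i j)
  · rintro (i | i) (j | j)
    · exact (adj_iff hc hi i j).trans (paw_inl_inl i j).symm
    · have hj : j = 0 := Subsingleton.elim (α := Fin 1) j 0
      rw [paw_inl_inr]
      exact (hinl i).trans (by simp [hj])
    · have hi' : i = 0 := Subsingleton.elim (α := Fin 1) i 0
      rw [SimpleGraph.adj_comm _ (Sum.inr i), paw_inl_inr]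
      exact (G.adj_comm v (c j)).trans ((hinl j).trans (by simp [hi']))
    · have hij : i = j := Subsingleton.elim (α := Fin 1) i j
      subst hij
      simp

lemma exists_cyc_of_not_acyclic (h : ¬ G.IsAcyclic) : ∃ n c, IsCyc G n c := by
  rw [isAcyclic_iff_free_cycleGraph] at h
  push Not at h
  obtain ⟨n, hn, h⟩ := h
  obtain ⟨k, rfl⟩ := Nat.exists_eq_add_of_le' hn
  obtain ⟨f⟩ := h
  have hval : ∀ i (hi : i < k + 3), f (Fin.ofNat (k + 3) i) = f ⟨i, hi⟩ := by
    intro i hi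
    congr 1
    exact Fin.ext (Nat.mod_eq_of_lt hi)
  refine ⟨k + 3, fun i => f (Fin.ofNat (k + 3) i), hn, ?_, ?_, ?_⟩
  · intro i j hi hj h
    simp only [hval _ hi, hval _ hj] at h
    simpa using f.injective h
  · intro i hi
    simp only [hval _ hi, hval i (by omega)]
    apply f.toHom.map_adj
    rw [cycleGraph_adj_iff]
    simp
  · have h2 : k + 3 - 1 < k + 3 := by omega
    simp only [hval _ h2, hval 0 (by omega)]
    apply f.toHom.map_adj
    rw [cycleGraph_adj_iff]
    simp

lemma IsCyc.rotate {n : ℕ} {c : ℕ → V} (hc : IsCyc G n c) (j : ℕ) (hj : j < n) :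
    IsCyc G n (fun k => if k + j < n then c (k + j) else c (k + j - n)) := by
  obtain ⟨h3, hinj, hs, hl⟩ := hc
  refine ⟨h3, ?_, ?_, ?_⟩
  · intro a b ha hb h
    dsimp only at h
    split_ifs at h
    all_goals
      have := hinj _ _ (by omega) (by omega) h
      omega
  · intro i hi
    dsimp only
    split_ifs with h1 h2 h2
    · have := hs (i + j) (by omega)
      rwa [show i + j + 1 = i + 1 + j by omega] at this
    · rw [show i + j = n - 1 by omega, show i + 1 + j - n = 0 by omega]
      exact hl
    · omega
    · have := hs (i + j - n) (by omega)
      rwa [show i + j - n + 1 = i + 1 + j - n by omega] at this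
  · dsimp only
    by_cases hj0 : j = 0
    · subst hj0
      rw [if_pos (by omega), if_pos (by omega)]
      exact hl
    · rw [if_neg (by omega), if_pos (by omega)]
      have := hs (j - 1) (by omega)
      rwa [show j - 1 + 1 = 0 + j by omega, show j - 1 = n - 1 + j - n by omega] at this

/-! ### Shortest cycles -/

/-- A chord of a cycle closes off a strictly shorter cycle. -/
lemma chordless_of_min {n : ℕ} {c : ℕ → V} (hc : IsCyc G n c)
    (hmin : ∀ m d, IsCyc G m d → n ≤ m) : Chordless G n c := by
  intro i j hij hj hadj
  by_contra hcon
  have : IsCyc G (j - i + 1) (fun k => c (i + k)) := by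
    obtain ⟨h3, hinj, hs, hl⟩ := hc
    refine ⟨by omega, ?_, ?_, ?_⟩
    · intro a b ha hb h
      have := hinj _ _ (by omega) (by omega) h
      omega
    · intro k hk
      exact hs (i + k) (by omega)
    · dsimp only
      rw [show i + (j - i + 1 - 1) = j by omega]
      exact hadj.symm
  have := hmin _ _ this
  omega

/-- On a shortest cycle of length at least five, a vertex off the cycle adjacent to `c 0` has no
other neighbour there: two neighbours at distance `j` along the cycle would give cycles of
lengths `j + 2` and `n - j + 2`. -/
lemma unique_nbr {n : ℕ} {c : ℕ → V} (hc : IsCyc G n c)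
    (hmin : ∀ m d, IsCyc G m d → n ≤ m) (h5 : 5 ≤ n)
    (v : V) (hv : ∀ i < n, v ≠ c i) (h0 : G.Adj v (c 0)) (j : ℕ) (hj0 : 0 < j) (hj : j < n) :
    ¬ G.Adj v (c j) := by
  intro hadj
  obtain ⟨h3, hinj, hs, hl⟩ := hc
  have hA : IsCyc G (j + 2) (fun k => if k ≤ j then c k else v) := by
    refine ⟨by omega, ?_, ?_, ?_⟩
    · intro a b ha hb h
      dsimp only at h
      split_ifs at h
      · exact hinj _ _ (by omega) (by omega) h
      · exact (hv a (by omega) h.symm).elim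
      · exact (hv b (by omega) h).elim
      · omega
    · intro k hk
      dsimp only
      by_cases hkj : k = j
      · subst hkj
        simpa using hadj.symm
      · rw [if_pos (by omega), if_pos (by omega)]
        exact hs k (by omega)
    · dsimp only
      rw [if_neg (by omega), if_pos (by omega)]
      exact h0
  have hB : IsCyc G (n - j + 2)
      (fun k => if k < n - j then c (k + j) else if k = n - j then c 0 else v) := by
    refine ⟨by omega, ?_, ?_, ?_⟩
    · intro a b ha hb h
      dsimp only at h
      split_ifs at h
      · have := hinj _ _ (by omega) (by omega) h
        omega
      · have := hinj _ _ (by omega) (by omega) h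
        omega
      · exact (hv _ (by omega) h.symm).elim
      · have := hinj _ _ (by omega) (by omega) h
        omega
      · omega
      · exact (hv _ (by omega) h.symm).elim
      · exact (hv _ (by omega) h).elim
      · exact (hv _ (by omega) h).elim
      · omega
    · intro k hk
      dsimp only
      by_cases hk1 : k = n - j
      · rw [if_neg (by omega), if_pos hk1, if_neg (by omega), if_neg (by omega)]
        exact h0.symm
      · by_cases hk2 : k + 1 = n - j
        · rw [if_pos (by omega), if_neg (by omega), if_pos hk2,
            show k + j = n - 1 by omega]
          exact hl
        · rw [if_pos (by omega), if_pos (by omega), show k + 1 + j = k + j + 1 by omega]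
          exact hs (k + j) (by omega)
    · dsimp only
      rw [if_neg (by omega), if_neg (by omega), if_pos (by omega), Nat.zero_add]
      exact hadj
  have := hmin _ _ hA
  have := hmin _ _ hB
  omega

lemma exists_crossing (hconn : G.Connected) (S : Set V) (hS : S.Nonempty) (hne : S ≠ Set.univ) :
    ∃ v z, v ∉ S ∧ z ∈ S ∧ G.Adj v z := by
  obtain ⟨s, hs⟩ := hS
  obtain ⟨t, ht⟩ := (Set.ne_univ_iff_exists_notMem S).1 hne
  obtain ⟨p⟩ := hconn.preconnected s t
  obtain ⟨d, -, h1, h2⟩ := p.exists_boundary_dart S hs ht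
  exact ⟨d.snd, d.fst, h2, h1, d.adj.symm⟩

lemma iso_of_long_girth (hconn : G.Connected) (hno : ∀ n m : ℕ, IsEmpty (pawSubdivision n m ↪g G))
    {n : ℕ} {c : ℕ → V} (hc : IsCyc G n c)
    (hmin : ∀ m d, IsCyc G m d → n ≤ m) (h5 : 5 ≤ n) :
    Nonempty (G ≃g cycleGraph n) := by
  obtain ⟨k, rfl⟩ := Nat.exists_eq_add_of_le' hc.1
  by_cases hS : c '' {i | i < k + 3} = Set.univ
  · have hbij : Function.Bijective (fun i : Fin (k + 3) => c i) := by
      refine ⟨fun i j h => Fin.ext (hc.2.1 _ _ i.isLt j.isLt h), fun v => ?_⟩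
      obtain ⟨i, hi, rfl⟩ : v ∈ c '' {i | i < k + 3} := hS ▸ Set.mem_univ v
      exact ⟨⟨i, hi⟩, rfl⟩
    let e : cycleGraph (k + 3) ≃g G :=
      ⟨Equiv.ofBijective _ hbij, fun {i j} => adj_iff hc (chordless_of_min hc hmin) i j⟩
    exact ⟨e.symm⟩
  · exfalso
    obtain ⟨v, z, hv, ⟨i, hi, rfl⟩, hadj⟩ :=
      exists_crossing hconn (c '' {i | i < k + 3}) ⟨c 0, 0, Nat.succ_pos _, rfl⟩ hS
    -- rotate the cycle so that the neighbour of `v` comes first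
    have hd := hc.rotate i hi
    have hv' : ∀ a < k + 3,
        v ≠ (fun a => if a + i < k + 3 then c (a + i) else c (a + i - (k + 3))) a := by
      intro a ha h
      dsimp only at h
      have hi' : i < k + 3 := hi
      split_ifs at h with h1
      · exact hv ⟨_, h1, h.symm⟩
      · exact hv ⟨_, show a + i - (k + 3) < k + 3 by omega, h.symm⟩
    have h0 : G.Adj v ((fun a => if a + i < k + 3 then c (a + i) else c (a + i - (k + 3))) 0) := by
      have hi' : i < k + 3 := hi
      simpa [hi'] using hadj
    obtain ⟨f⟩ := paw_of_cyc hd (chordless_of_min hd hmin) v hv' h0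
      (fun j hj0 hj => unique_nbr hd hmin h5 v hv' h0 j hj0 hj)
    exact (hno k 0).false f

/-! ### Complete multipartite subgraphs -/

/-- The set `S` contains the vertices of a triangle or of an induced four-cycle. -/
def HasShort (G : SimpleGraph V) (S : Set V) : Prop :=
  (∃ a ∈ S, ∃ b ∈ S, ∃ c ∈ S, G.Adj a b ∧ G.Adj b c ∧ G.Adj a c) ∨
  (∃ a ∈ S, ∃ b ∈ S, ∃ c ∈ S, ∃ d ∈ S, a ≠ c ∧ b ≠ d ∧
    G.Adj a b ∧ G.Adj b c ∧ G.Adj c d ∧ G.Adj a d ∧ ¬ G.Adj a c ∧ ¬ G.Adj b d)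

/-- Non-adjacency is transitive on `S`, so that `S` induces a complete multipartite graph
(possibly with a single part). -/
def Multi (G : SimpleGraph V) (S : Set V) : Prop :=
  ∀ u ∈ S, ∀ v ∈ S, ∀ w ∈ S, ¬ G.Adj u v → ¬ G.Adj v w → ¬ G.Adj u w

/-- There is no induced paw. -/
lemma no_paw (hno : ∀ n m : ℕ, IsEmpty (pawSubdivision n m ↪g G)) {a b c v : V}
    (hab : G.Adj a b) (hbc : G.Adj b c) (hac : G.Adj a c) (hv : G.Adj v a)
    (hvb : ¬ G.Adj v b) (hvc : ¬ G.Adj v c) : False := by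
  have hcyc : IsCyc G (0 + 3) (fun i => if i = 0 then a else if i = 1 then b else c) := by
    refine ⟨le_rfl, ?_, ?_, by simpa using hac.symm⟩
    · have := hab.ne
      have := hbc.ne
      have := hac.ne
      intro i j hi hj h
      interval_cases i <;> interval_cases j <;> simp_all
    · intro i hi
      obtain rfl | rfl : i = 0 ∨ i = 1 := by omega
      · simpa using hab
      · simpa using hbc
  obtain ⟨f⟩ := paw_of_cyc hcyc (fun i j _ _ _ => by omega) v
    (by
      intro i hi h
      have := hv.ne
      interval_cases i <;> simp_all [G.adj_comm])
    (by simpa using hv)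
    (by
      intro i h0 hi
      interval_cases i <;> simpa)
  exact (hno 0 0).false f

/-- There is no induced four-cycle with a pendant vertex. -/
lemma no_paw4 (hno : ∀ n m : ℕ, IsEmpty (pawSubdivision n m ↪g G)) {a b c d v : V}
    (hab : G.Adj a b) (hbc : G.Adj b c) (hcd : G.Adj c d) (had : G.Adj a d)
    (hac : ¬ G.Adj a c) (hbd : ¬ G.Adj b d) (hac' : a ≠ c) (hbd' : b ≠ d) (hv : G.Adj v a)
    (hvb : ¬ G.Adj v b) (hvc : ¬ G.Adj v c) (hvd : ¬ G.Adj v d) : False := by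
  have hcyc : IsCyc G (1 + 3)
      (fun i => if i = 0 then a else if i = 1 then b else if i = 2 then c else d) := by
    refine ⟨by omega, ?_, ?_, by simpa using had.symm⟩
    · have := hab.ne
      have := hbc.ne
      have := hcd.ne
      have := had.ne
      intro i j hi hj h
      interval_cases i <;> interval_cases j <;> simp_all
    · intro i hi
      obtain rfl | rfl | rfl : i = 0 ∨ i = 1 ∨ i = 2 := by omega
      · simpa using hab
      · simpa using hbc
      · simpa using hcd
  obtain ⟨f⟩ := paw_of_cyc hcyc
    (by
      intro i j hij hj hadj
      by_contra hcon
      obtain ⟨rfl, rfl⟩ | ⟨rfl, rfl⟩ : (i = 0 ∧ j = 2) ∨ (i = 1 ∧ j = 3) := by omega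
      · exact hac (by simpa using hadj)
      · exact hbd (by simpa using hadj))
    v
    (by
      intro i hi h
      have := hv.ne
      interval_cases i <;> simp_all [G.adj_comm])
    (by simpa using hv)
    (by
      intro i h0 hi
      interval_cases i <;> simpa)
  exact (hno 1 0).false f

/-- In a complete multipartite graph with a triangle or a four-cycle, `x` and `y` have a common
neighbour or `y` has a non-neighbour other than itself; for an edge `xy`, this says that the edge
lies in a triangle or the part of `y` has another vertex. -/
lemma third_or_twin {S : Set V} (hm : Multi G S) (hs : HasShort G S) {x y : V} (hx : x ∈ S) :
    (∃ w ∈ S, G.Adj w x ∧ G.Adj w y) ∨ (∃ y' ∈ S, y' ≠ y ∧ ¬ G.Adj y' y) := by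
  by_contra! hcon
  obtain ⟨h1, h2⟩ := hcon
  -- every `s ≠ y` is adjacent to `y`, hence is in the part of `x`
  have h3 : ∀ s ∈ S, s ≠ y → ¬ G.Adj s x := fun s hs hne h => h1 s hs h (h2 s hs hne)
  have h4 : ∀ s ∈ S, ∀ t ∈ S, G.Adj s t → s = y ∨ t = y := by
    intro s hs t ht hst
    by_contra! hne
    exact hm s hs x hx t ht (h3 s hs hne.1) (fun h => h3 t ht hne.2 h.symm) hst
  rcases hs with ⟨a, ha, b, hb, c, hc, hab, hbc, hac⟩ |
    ⟨a, ha, b, hb, c, hc, d, hd, hac', hbd', hab, hbc, hcd, had, hac, hbd⟩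
  · have := h4 a ha b hb hab
    have := h4 b hb c hc hbc
    have := h4 a ha c hc hac
    have := hab.ne
    have := hbc.ne
    have := hac.ne
    grind
  · have := h4 a ha b hb hab
    have := h4 b hb c hc hbc
    have := h4 c hc d hd hcd
    have := h4 a ha d hd had
    have := hab.ne
    have := hbc.ne
    have := hcd.ne
    have := had.ne
    have := h2 a ha
    have := h2 b hb
    have := h2 c hc
    have := h2 d hd
    have := G.adj_comm a c
    have := G.adj_comm b d
    grind

/-- The non-neighbours in `S` of a vertex `v` attached to `S` form a stable set. -/
lemma nonnbrs_stable (hno : ∀ n m : ℕ, IsEmpty (pawSubdivision n m ↪g G)) {S : Set V}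
    (hm : Multi G S) (hs : HasShort G S) {v z : V} (hz : z ∈ S) (hvz : G.Adj v z)
    {x y : V} (hx : x ∈ S) (hy : y ∈ S) (hvx : ¬ G.Adj v x) (hvy : ¬ G.Adj v y) :
    ¬ G.Adj x y := by
  intro hxy
  wlog hzx : ¬ G.Adj z x generalizing x y
  · rw [not_not] at hzx
    by_cases hzy : G.Adj z y
    · exact no_paw hno hzx hxy hzy hvz hvx hvy
    · exact this hy hx hvy hvx hxy.symm hzy
  have hzy : G.Adj z y := by
    by_contra h
    exact hm x hx z hz y hy (fun h => hzx h.symm) h hxy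
  have hne : z ≠ x := by
    rintro rfl
    exact hvx hvz
  rcases third_or_twin (y := y) hm hs hx with ⟨w, hw, hwx, hwy⟩ | ⟨y', hy', hne', hyy'⟩
  · have hwz : G.Adj w z := by
      by_contra h
      exact hm w hw z hz x hx h hzx hwx
    by_cases hvw : G.Adj v w
    · exact no_paw hno hwx hxy hwy hvw hvx hvy
    · exact no_paw hno hwz.symm hwy hzy hvz hvw hvy
  · have hyx : G.Adj y' x := by
      by_contra h
      exact hm y hy y' hy' x hx (fun h => hyy' h.symm) h hxy.symm
    have hyz : G.Adj z y' := by
      by_contra h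
      exact hm z hz y' hy' y hy h hyy' hzy
    by_cases hvy' : G.Adj v y'
    · exact no_paw hno hvz.symm hvy' hyz hzy.symm (fun h => hvy h.symm) (fun h => hyy' h.symm)
    · exact no_paw4 hno hzy hxy.symm hyx.symm hyz hzx (fun h => hyy' h.symm) hne hne'.symm hvz
        hvy hvx hvy'

/-- A part of `S` containing a non-neighbour of an attached vertex `v` consists of
non-neighbours. -/
lemma nonnbrs_closed (hno : ∀ n m : ℕ, IsEmpty (pawSubdivision n m ↪g G)) {S : Set V}
    (hm : Multi G S) (hs : HasShort G S) {v z : V} (hz : z ∈ S) (hvz : G.Adj v z)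
    {x y : V} (hx : x ∈ S) (hy : y ∈ S) (hvx : ¬ G.Adj v x) (hxy : ¬ G.Adj x y) :
    ¬ G.Adj v y := by
  intro hvy
  obtain ⟨t, ht, htx⟩ : ∃ t ∈ S, G.Adj t x := by
    by_contra! h
    have : ∀ s ∈ S, ∀ t ∈ S, ¬ G.Adj s t := fun s hs t ht =>
      hm s hs x hx t ht (h s hs) (fun h' => h t ht h'.symm)
    rcases hs with ⟨a, ha, b, hb, -, -, hab, -⟩ | ⟨a, ha, b, hb, -, -, -, -, -, -, hab, -⟩
    · exact this a ha b hb hab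
    · exact this a ha b hb hab
  have hty : G.Adj t y := by
    by_contra h
    exact hm t ht y hy x hx h (fun h => hxy h.symm) htx
  have hvt : G.Adj v t := by
    by_contra h
    exact nonnbrs_stable hno hm hs hz hvz ht hx h hvx htx
  exact no_paw hno hvt.symm hvy hty htx.symm (fun h => hvx h.symm) hxy

lemma multi_insert (hno : ∀ n m : ℕ, IsEmpty (pawSubdivision n m ↪g G)) {S : Set V}
    (hm : Multi G S) (hs : HasShort G S) {v z : V} (hz : z ∈ S) (hvz : G.Adj v z) :
    Multi G (insert v S) := by
  have h1 := @nonnbrs_stable V G hno S hm hs v z hz hvz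
  have h2 := @nonnbrs_closed V G hno S hm hs v z hz hvz
  rintro a (rfl | ha) b (rfl | hb) c (rfl | hc) hab hbc
  · exact hab
  · exact hbc
  · exact G.irrefl
  · exact h2 hb hc hab hbc
  · exact hab
  · exact h1 ha hc (fun h => hab h.symm) hbc
  · exact fun h => h2 hb ha (fun h => hbc h.symm) (fun h => hab h.symm) h.symm
  · exact hm a ha b hb c hc hab hbc

lemma HasShort.mono {S T : Set V} (h : S ⊆ T) (hs : HasShort G S) : HasShort G T := by
  rcases hs with ⟨a, ha, b, hb, c, hc, hr⟩ | ⟨a, ha, b, hb, c, hc, d, hd, hr⟩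
  · exact .inl ⟨a, h ha, b, h hb, c, h hc, hr⟩
  · exact .inr ⟨a, h ha, b, h hb, c, h hc, d, h hd, hr⟩

lemma multi_univ [Finite V] (hconn : G.Connected)
    (hno : ∀ n m : ℕ, IsEmpty (pawSubdivision n m ↪g G)) {S : Set V}
    (hm : Multi G S) (hs : HasShort G S) : Multi G Set.univ := by
  obtain ⟨T, -, hT⟩ := Finite.exists_le_maximal (p := fun S : Set V => Multi G S ∧ HasShort G S)
    ⟨hm, hs⟩
  by_cases hTu : T = Set.univ
  · exact hTu ▸ hT.prop.1
  · exfalso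
    have hne : T.Nonempty := by
      rcases hT.prop.2 with ⟨a, ha, -⟩ | ⟨a, ha, -⟩ <;> exact ⟨a, ha⟩
    obtain ⟨v, z, hv, hz, hvz⟩ := exists_crossing hconn T hne hTu
    have hsub : T ⊆ insert v T := Set.subset_insert v T
    exact hv (hT.le_of_ge ⟨multi_insert hno hT.prop.1 hT.prop.2 hz hvz, hT.prop.2.mono hsub⟩ hsub
      (Set.mem_insert v T))

lemma multi_of_short_girth {n : ℕ} {c : ℕ → V} (hc : IsCyc G n c)
    (hmin : ∀ m d, IsCyc G m d → n ≤ m) (h5 : n < 5) :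
    ∃ S : Set V, Multi G S ∧ HasShort G S := by
  have hch := chordless_of_min hc hmin
  obtain ⟨h3, hinj, hs, hl⟩ := hc
  obtain rfl | rfl : n = 3 ∨ n = 4 := by omega
  · have h01 : G.Adj (c 0) (c 1) := hs 0 (by omega)
    have h12 : G.Adj (c 1) (c 2) := hs 1 (by omega)
    have h20 : G.Adj (c 2) (c 0) := hl
    refine ⟨{c 0, c 1, c 2}, ?_, .inl ⟨c 0, by simp, c 1, by simp, c 2, by simp, h01, h12,
      h20.symm⟩⟩
    rintro u (rfl | rfl | rfl) v (rfl | rfl | rfl) w (rfl | rfl | rfl) <;>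
      simp [h01, h12, h20, h01.symm, h12.symm, h20.symm]
  · have h01 : G.Adj (c 0) (c 1) := hs 0 (by omega)
    have h12 : G.Adj (c 1) (c 2) := hs 1 (by omega)
    have h23 : G.Adj (c 2) (c 3) := hs 2 (by omega)
    have h30 : G.Adj (c 3) (c 0) := hl
    have h02 : ¬ G.Adj (c 0) (c 2) := fun h => by
      have := hch 0 2 (by omega) (by omega) h
      omega
    have h13 : ¬ G.Adj (c 1) (c 3) := fun h => by
      have := hch 1 3 (by omega) (by omega) h
      omega
    refine ⟨{c 0, c 1, c 2, c 3}, ?_, .inr ⟨c 0, by simp, c 1, by simp, c 2, by simp, c 3,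
      by simp, fun h => ?_, fun h => ?_, h01, h12, h23, h30.symm, h02, h13⟩⟩
    · have h02' : ¬ G.Adj (c 2) (c 0) := fun h => h02 h.symm
      have h13' : ¬ G.Adj (c 3) (c 1) := fun h => h13 h.symm
      rintro u (rfl | rfl | rfl | rfl) v (rfl | rfl | rfl | rfl) w (rfl | rfl | rfl | rfl) <;>
        simp [h01, h12, h23, h30, h01.symm, h12.symm, h23.symm, h30.symm, h02, h13, h02', h13']
    · have := hinj 0 2 (by omega) (by omega) h
      omega
    · have := hinj 1 3 (by omega) (by omega) h
      omega

/-! ### The three families contain no subdivided paw -/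

lemma cycleGraph_no_paw {k n m : ℕ} (f : pawSubdivision n m ↪g cycleGraph (k + 3)) : False := by
  classical
  have h1 : (pawSubdivision n m).Adj (.inl 0) (.inl ⟨1, by omega⟩) := by
    rw [paw_inl_inl, cycleGraph_adj_iff]
    simp
  have h2 : (pawSubdivision n m).Adj (.inl 0) (.inl ⟨n + 2, by omega⟩) := by
    rw [paw_inl_inl, cycleGraph_adj_iff]
    simp
  have h3 : (pawSubdivision n m).Adj (.inl 0) (.inr 0) := by
    rw [paw_inl_inr]
    simp
  have hsub : ({f (.inl ⟨1, by omega⟩), f (.inl ⟨n + 2, by omega⟩), f (.inr 0)} :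
      Finset (Fin (k + 3))) ⊆ (cycleGraph (k + 3)).neighborFinset (f (.inl 0)) := by
    intro x hx
    simp only [Finset.mem_insert, Finset.mem_singleton] at hx
    rw [SimpleGraph.mem_neighborFinset]
    rcases hx with rfl | rfl | rfl
    · exact f.map_adj_iff.2 h1
    · exact f.map_adj_iff.2 h2
    · exact f.map_adj_iff.2 h3
  have hcard := Finset.card_le_card hsub
  rw [SimpleGraph.card_neighborFinset_eq_degree, cycleGraph_degree_three_le,
    Finset.card_eq_three.2 ⟨_, _, _, ?_, ?_, ?_, rfl⟩] at hcard
  · omega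
  all_goals simp [f.injective.eq_iff]

lemma paw_not_acyclic (n m : ℕ) : ¬ (pawSubdivision n m).IsAcyclic := by
  rw [isAcyclic_iff_free_cycleGraph]
  intro h
  exact h (n + 3) (by omega)
    ⟨⟨⟨Sum.inl, fun {i j} hij => (paw_inl_inl i j).2 hij⟩, Sum.inl_injective⟩⟩

end PawProof

/-- A connected graph contains no induced subdivision of the paw iff it is a cycle, or
a complete multipartite graph with at least two parts, or a tree. -/
theorem no_induced_paw_subdivision_iff {V : Type*} [Fintype V] (G : SimpleGraph V)
    (hconn : G.Connected) :
    (∀ n m : ℕ, IsEmpty (pawSubdivision n m ↪g G)) ↔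
      ((∃ n : ℕ, 3 ≤ n ∧ Nonempty (G ≃g cycleGraph n)) ∨
        ((∃ u v : V, G.Adj u v) ∧
          ∀ u v w : V, ¬ G.Adj u v → ¬ G.Adj v w → ¬ G.Adj u w) ∨
        G.IsTree) := by
  classical
  constructor
  · intro hno
    by_cases hac : G.IsAcyclic
    · exact .inr (.inr ⟨hconn, hac⟩)
    · have hex := PawProof.exists_cyc_of_not_acyclic hac
      obtain ⟨c, hc⟩ := Nat.find_spec hex
      have hmin : ∀ m d, PawProof.IsCyc G m d → Nat.find hex ≤ m :=
        fun m d hd => Nat.find_min' hex ⟨d, hd⟩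
      by_cases h5 : 5 ≤ Nat.find hex
      · exact .inl ⟨_, hc.1, PawProof.iso_of_long_girth hconn hno hc hmin h5⟩
      · obtain ⟨S, hm, hs⟩ := PawProof.multi_of_short_girth hc hmin (by omega)
        have hu := PawProof.multi_univ hconn hno hm hs
        refine .inr (.inl ⟨⟨_, _, hc.2.2.2⟩, fun u v w => ?_⟩)
        exact hu u trivial v trivial w trivial
  · rintro (⟨k, hk, ⟨e⟩⟩ | ⟨-, hm⟩ | ht) n m
    · obtain ⟨k, rfl⟩ := Nat.exists_eq_add_of_le' hk
      exact ⟨fun f => PawProof.cycleGraph_no_paw (e.toEmbedding.comp f)⟩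
    · -- the first pendant vertex misses both ends of the cycle edge from vertex 1 to vertex 2
      refine ⟨fun f => hm (f (.inl ⟨1, by omega⟩)) (f (.inr 0)) (f (.inl ⟨2, by omega⟩)) ?_ ?_ ?_⟩
      · rw [f.map_adj_iff, PawProof.paw_inl_inr]
        simp
      · rw [f.map_adj_iff, SimpleGraph.adj_comm, PawProof.paw_inl_inr]
        simp [Fin.ext_iff]
      · rw [f.map_adj_iff, PawProof.paw_inl_inl, PawProof.cycleGraph_adj_iff]
        simp
    · exact ⟨fun f => PawProof.paw_not_acyclic n m (ht.isAcyclic.embedding f)⟩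
end

section
/- Let G be a weakly triangulated graph, P a path of G of length at least 3 with ends x and y, and T ⊆ V(G) disjoint from V(P) such that the complement of G[T] is connected and both ends of P are complete to T. Then P has an interior vertex that is complete to T. -/
/-!
The proof is by induction on `|T|`, for all paths `p 0, …, p n` at once.

If `T = {t}` and `t` has no neighbour in the interior of the path, then the path and `t` form a
hole of length `n + 2 ≥ 5` (`IsIndPath.close`).

If `|T| ≥ 2`, the complement of `G[T]` has two distinct non-cut vertices `s` and `t`
(`exists_nonCut`). By induction `T \ {s}` satisfies the conclusion, both for the whole path and for
each of its initial segments of length at least 3; hence the first interior vertex complete to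
`T \ {s}` is `p 1` or `p 2`. The same holds for `T \ {t}`. In a counterexample no vertex serves
both purposes, so `{p 1, p 2} = {u, v}` where `s` is the only non-neighbour of `u` in `T` and `t`
that of `v`. Take an induced path `Q` of the complement from `s` to `t` inside `T`
(`exists_isIndPath`). As `u` and `v` are adjacent in `G`, the sequence `u, Q, v` is an induced path
of the complement with at least four vertices (`IsIndPath.extend`). If `n ≥ 4`, the vertex `p n`
closes it to a long antihole. If `n = 3`, the vertices `p 0` and `p 3` together do so: each is
adjacent in `G` to exactly one of `u`, `v`, they are nonadjacent in `G`, and both are complete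
to `T`.
-/

open SimpleGraph

/-- A graph is weakly triangulated if it contains no induced cycle of length ≥ 5
(long hole) and no complement of such a cycle (long antihole) as an induced subgraph. -/
def SimpleGraph.IsWeaklyTriangulated {V : Type*} (G : SimpleGraph V) : Prop :=
  ∀ n : ℕ, 5 ≤ n → IsEmpty (cycleGraph n ↪g G) ∧ IsEmpty ((cycleGraph n)ᶜ ↪g G)

/-! ### Induced paths and cycles -/

/-- `c 0, c 1, …, c n` are the vertices, in order, of an induced path with `n` edges in `H`.
The values `c i` for `i > n` are irrelevant. -/
def IsIndPath {V : Type*} (H : SimpleGraph V) (n : ℕ) (c : ℕ → V) : Prop :=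
  ∀ i j, i < j → j ≤ n → c i ≠ c j ∧ (H.Adj (c i) (c j) ↔ j = i + 1)

/-- The sequence `c 0, …, c n, w, w, …`, that is, `c` prolonged by `w` after index `n`. -/
def snocSeq {V : Type*} (n : ℕ) (c : ℕ → V) (w : V) (i : ℕ) : V :=
  if i ≤ n then c i else w

lemma IsIndPath.snoc {V : Type*} {H : SimpleGraph V} {n : ℕ} {c : ℕ → V}
    (h : IsIndPath H n c) {w : V} (hne : ∀ i ≤ n, c i ≠ w)
    (hadj : ∀ i ≤ n, (H.Adj (c i) w ↔ i = n)) :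
    IsIndPath H (n + 1) (snocSeq n c w) := by
  intro i j hij hj
  have hi : i ≤ n := by omega
  by_cases hjn : j ≤ n
  · simpa [snocSeq, hi, hjn] using h i j hij hjn
  · have := hadj i hi
    simp only [snocSeq, hi, hjn, if_true, if_false]
    refine ⟨hne i hi, this.trans ?_⟩
    omega

lemma IsIndPath.reverse {V : Type*} {H : SimpleGraph V} {n : ℕ} {c : ℕ → V}
    (h : IsIndPath H n c) : IsIndPath H n (fun i => c (n - i)) := by
  intro i j hij hj
  obtain ⟨h1, h2⟩ := h (n - j) (n - i) (by omega) (by omega)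
  refine ⟨h1.symm, ?_⟩
  rw [H.adj_comm, h2]
  omega

/-- An induced path together with a further vertex adjacent exactly to its two ends is an
induced cycle. -/
lemma IsIndPath.close {V : Type*} {H : SimpleGraph V} {n : ℕ} {c : ℕ → V}
    (h : IsIndPath H n c) {w : V} (hne : ∀ i ≤ n, c i ≠ w)
    (hadj : ∀ i ≤ n, (H.Adj (c i) w ↔ i = 0 ∨ i = n)) :
    Nonempty (cycleGraph (n + 2) ↪g H) := by
  have key : ∀ i j : Fin (n + 2), i < j → snocSeq n c w i ≠ snocSeq n c w j ∧
      (H.Adj (snocSeq n c w i) (snocSeq n c w j) ↔ (cycleGraph (n + 2)).Adj i j) := by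
    intro i j hij
    have hij' : i.val < j.val := hij
    have hj' := j.isLt
    have hi : i.val ≤ n := by omega
    have e1 : (j - i).val = j.val - i.val := Fin.sub_val_of_le hij.le
    have e2 : (i - j).val = n + 2 + i.val - j.val := Fin.coe_sub_iff_lt.2 hij
    rw [cycleGraph_adj', e1, e2]
    by_cases hjn : j.val ≤ n
    · obtain ⟨h1, h2⟩ := h i j hij' hjn
      simp only [snocSeq, hi, hjn, if_true]
      refine ⟨h1, h2.trans ?_⟩
      omega
    · simp only [snocSeq, hi, hjn, if_true, if_false]
      refine ⟨hne _ hi, (hadj _ hi).trans ?_⟩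
      omega
  refine ⟨⟨⟨fun i => snocSeq n c w i, ?_⟩, ?_⟩⟩
  · intro i j hij
    rcases lt_trichotomy i j with hl | hl | hl
    · exact absurd hij (key i j hl).1
    · exact hl
    · exact absurd hij.symm (key j i hl).1
  · intro i j
    rcases lt_trichotomy i j with hl | hl | hl
    · exact (key i j hl).2
    · subst hl; simp
    · have := (key j i hl).2
      rw [H.adj_comm, (cycleGraph (n + 2)).adj_comm] at this
      exact this

/-- An induced path inside `T` extends by one vertex at each end when the new vertices `u`, `v`
are nonadjacent and each has exactly one neighbour in `T`, namely its end of the path. -/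
lemma IsIndPath.extend {V : Type*} {H : SimpleGraph V} {k : ℕ} {c : ℕ → V} {T : Set V}
    (h : IsIndPath H k c) (hcT : ∀ i, c i ∈ T) {u v : V} (hu : u ∉ T) (hv : v ∉ T)
    (huv : u ≠ v) (hnadj : ¬ H.Adj u v) (hua : ∀ z ∈ T, (H.Adj z u ↔ z = c 0))
    (hva : ∀ z ∈ T, (H.Adj z v ↔ z = c k)) :
    ∃ d : ℕ → V, d 0 = u ∧ d (k + 2) = v ∧ IsIndPath H (k + 2) d ∧
      ∀ i, 0 < i → i < k + 2 → d i ∈ T := by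
  have hinj : ∀ i j, i ≤ k → j ≤ k → c i = c j → i = j := by
    intro i j hi hj he
    rcases lt_trichotomy i j with hl | hl | hl
    · exact absurd he (h i j hl hj).1
    · exact hl
    · exact absurd he.symm (h j i hl hi).1
  have h1 := (h.reverse.snoc (w := u) (fun i _ he => hu (he ▸ hcT _)) (by
    intro i hi
    rw [hua _ (hcT _)]
    refine ⟨fun he => ?_, fun he => by simp [he]⟩
    have := hinj _ _ (by omega) (by omega) he
    omega)).reverse
  set e : ℕ → V := fun i => snocSeq k (fun i => c (k - i)) u (k + 1 - i) with he_def
  have e0 : e 0 = u := by simp [he_def, snocSeq]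
  have es : ∀ i, 0 < i → i ≤ k + 1 → e i = c (i - 1) := by
    intro i hi hi'
    have h2 : k + 1 - i ≤ k := by omega
    have h3 : k - (k + 1 - i) = i - 1 := by omega
    simp only [he_def, snocSeq, h2, if_true, h3]
  have h2 := h1.snoc (w := v) (by
    intro i hi he
    rcases Nat.eq_zero_or_pos i with rfl | hi0
    · exact huv (e0 ▸ he)
    · exact hv (he ▸ es i hi0 hi ▸ hcT _)) (by
    intro i hi
    rcases Nat.eq_zero_or_pos i with rfl | hi0
    · rw [e0]
      exact ⟨fun h => absurd h hnadj, fun h => by omega⟩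
    · rw [es i hi0 hi, hva _ (hcT _)]
      refine ⟨fun he => ?_, fun he => by simp [he]⟩
      have := hinj _ _ (by omega) (by omega) he
      omega)
  refine ⟨_, by simp [snocSeq, e0], by simp [snocSeq], h2, ?_⟩
  intro i hi0 hi
  have hi' : i ≤ k + 1 := by omega
  simp only [snocSeq, hi', if_true, es i hi0 hi']
  exact hcT _

/-! ### Geodesics and non-cut vertices -/

/-- In a connected graph any vertices `a`, `b` are joined by a geodesic; the `i`-th vertex of
the geodesic is at distance `i` from `a`. -/
lemma exists_geodesic {W : Type*} {K : SimpleGraph W} (hK : K.Connected) (a b : W) :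
    ∃ c : ℕ → W, c 0 = a ∧ c (K.dist a b) = b ∧
      (∀ i ≤ K.dist a b, K.dist a (c i) = i) ∧
      ∀ i < K.dist a b, K.Adj (c i) (c (i + 1)) := by
  obtain ⟨p, hp⟩ := hK.exists_walk_length_eq_dist a b
  refine ⟨p.getVert, by simp, by rw [← hp]; simp, ?_, ?_⟩
  · intro i hi
    have h1 := dist_le (p.take i)
    have h2 := dist_le (p.drop i)
    have h3 : K.dist a b ≤ _ := hK.dist_triangle (v := p.getVert i)
    rw [Walk.take_length] at h1
    rw [Walk.drop_length] at h2
    omega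
  · intro i hi
    exact p.adj_getVert_succ (by omega)

lemma exists_isIndPath {V : Type*} {H : SimpleGraph V} {T : Set V}
    (hT : (H.induce T).Connected) {a b : V} (ha : a ∈ T) (hb : b ∈ T) :
    ∃ (n : ℕ) (c : ℕ → V), c 0 = a ∧ c n = b ∧ IsIndPath H n c ∧ ∀ i, c i ∈ T := by
  obtain ⟨c, h0, hn, hd, hadj⟩ := exists_geodesic hT ⟨a, ha⟩ ⟨b, hb⟩
  refine ⟨_, fun i => c i, by simp [h0], congrArg Subtype.val hn, ?_, fun i => (c i).2⟩
  intro i j hij hj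
  have di := hd i (by omega)
  have dj := hd j hj
  refine ⟨fun he => ?_, fun he => ?_, ?_⟩
  · rw [Subtype.ext he] at di
    omega
  · have h1 : (H.induce T).dist (c i) (c j) = 1 := dist_eq_one_iff_adj.2 he
    have h2 : (H.induce T).dist ⟨a, ha⟩ (c j) ≤ _ := hT.dist_triangle (v := c i)
    omega
  · rintro rfl
    exact hadj i (by omega)

/-- A finite connected graph with at least two vertices has, for each vertex `a`, a non-cut
vertex other than `a`: any vertex at maximum distance from `a`. -/
lemma exists_nonCut {V : Type*} {H : SimpleGraph V} {T : Set V} (hfin : T.Finite)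
    (hT : (H.induce T).Connected) (hnt : T.Nontrivial) {a : V} (ha : a ∈ T) :
    ∃ w ∈ T, w ≠ a ∧ (H.induce (T \ {w})).Connected := by
  have : Finite T := hfin
  have : Nonempty T := ⟨⟨a, ha⟩⟩
  obtain ⟨w, hw⟩ := Finite.exists_max (fun v : T => (H.induce T).dist ⟨a, ha⟩ v)
  have hwa : (w : V) ≠ a := by
    intro he
    obtain ⟨b, hb, hba⟩ := hnt.exists_ne a
    have h1 := hw ⟨b, hb⟩
    have h2 : w = ⟨a, ha⟩ := Subtype.ext he
    have h3 := hT.pos_dist_of_ne (u := ⟨a, ha⟩) (v := ⟨b, hb⟩)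
      (fun h => hba (congrArg Subtype.val h).symm)
    rw [h2, dist_self] at h1
    omega
  refine ⟨w, w.2, hwa, ?_⟩
  have ha' : a ∈ T \ {(w : V)} := ⟨ha, fun h => hwa h.symm⟩
  rw [connected_iff_exists_forall_reachable]
  refine ⟨⟨a, ha'⟩, ?_⟩
  rintro ⟨u, huT, huw⟩
  obtain ⟨c, h0, hn, hd, hadj⟩ := exists_geodesic hT ⟨a, ha⟩ ⟨u, huT⟩
  set n := (H.induce T).dist ⟨a, ha⟩ ⟨u, huT⟩ with hn_def
  have hcw : ∀ i ≤ n, (c i : V) ∈ T \ {(w : V)} := by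
    intro i hi
    refine ⟨(c i).2, fun h => ?_⟩
    have h1 : c i = w := Subtype.ext h
    have h2 := hw ⟨u, huT⟩
    have h3 := hd i hi
    rw [h1] at h3
    have h4 : i = n := by omega
    rw [h4, hn] at h1
    exact huw (congrArg Subtype.val h1)
  have hreach : ∀ i (hi : i ≤ n),
      (H.induce (T \ {(w : V)})).Reachable ⟨a, ha'⟩ ⟨c i, hcw i hi⟩ := by
    intro i
    induction i with
    | zero =>
      intro hi
      have : (⟨c 0, hcw 0 hi⟩ : ↑(T \ {(w : V)})) = ⟨a, ha'⟩ := Subtype.ext (by simp [h0])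
      rw [this]
    | succ i ih =>
      intro hi
      refine (ih (by omega)).trans (Adj.reachable ?_)
      exact hadj i (by omega)
  have := hreach n le_rfl
  simp only [hn] at this
  exact this

/-! ### Roussel–Rubio for weakly triangulated graphs -/

/-- The Roussel–Rubio property for a path given as a sequence of vertices, with `G[T]` anticonnected
expressed as connectedness of `Gᶜ[T]`; the induction is on `m = |T|`. -/
lemma exists_complete_of_isIndPath {V : Type*} {G : SimpleGraph V}
    (hwt : G.IsWeaklyTriangulated) (m : ℕ) :
    ∀ (T : Set V), T.Finite → T.ncard = m → (Gᶜ.induce T).Connected →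
    ∀ (n : ℕ) (p : ℕ → V), 3 ≤ n → IsIndPath G n p → (∀ i ≤ n, p i ∉ T) →
      (∀ t ∈ T, G.Adj (p 0) t) → (∀ t ∈ T, G.Adj (p n) t) →
      ∃ i, 0 < i ∧ i < n ∧ ∀ t ∈ T, G.Adj (p i) t := by
  induction m using Nat.strong_induction_on with
  | _ m ih =>
  intro T hfin hcard hconn n p hn hp hdisj h0 hend
  by_contra! hcon
  obtain ⟨⟨a, ha⟩⟩ := hconn.nonempty
  by_cases hnt : T.Nontrivial
  swap
  · -- `T = {a}`: the path closes to a long hole through `a`.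
    rw [Set.not_nontrivial_iff] at hnt
    obtain ⟨e⟩ := hp.close (w := a) (fun i hi he => hdisj i hi (he ▸ ha)) (by
      intro i hi
      constructor
      · intro hadj
        by_contra! hi'
        obtain ⟨t, ht, htn⟩ := hcon i (by omega) (by omega)
        exact htn (hnt ht ha ▸ hadj)
      · rintro (rfl | rfl)
        · exact h0 a ha
        · exact hend a ha)
    exact (hwt (n + 2) (by omega)).1.false e
  obtain ⟨s, hs, -, hsc⟩ := exists_nonCut hfin hconn hnt ha
  obtain ⟨t, ht, hts, htc⟩ := exists_nonCut hfin hconn hnt hs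
  -- If `r` is a non-cut vertex, then `p 1` or `p 2` is complete to `T \ {r}`: otherwise the
  -- initial segment ending at the first interior vertex complete to `T \ {r}` has length at least
  -- 3 and none of its interior vertices is complete to `T \ {r}`.
  have hone : ∀ r ∈ T, (Gᶜ.induce (T \ {r})).Connected → ∃ i, (i = 1 ∨ i = 2) ∧
      (∀ z ∈ T, z ≠ r → G.Adj (p i) z) ∧ ¬ G.Adj (p i) r := by
    intro r hr hrc
    have hlt : (T \ {r}).ncard < m := hcard ▸ Set.ncard_sdiff_singleton_lt_of_mem hr hfin
    have hex : ∃ k, 0 < k ∧ k < n ∧ ∀ z ∈ T \ {r}, G.Adj (p k) z :=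
      ih _ hlt _ hfin.sdiff rfl hrc n p hn hp
        (fun i hi h => hdisj i hi h.1) (fun z hz => h0 z hz.1) (fun z hz => hend z hz.1)
    classical
    obtain ⟨hk0, hkn, hk⟩ := Nat.find_spec hex
    set k := Nat.find hex with hk_def
    have hk2 : k ≤ 2 := by
      by_contra! hk3
      obtain ⟨i, hi0, hik, hi⟩ := ih _ hlt _ hfin.sdiff rfl hrc k p hk3
        (fun i j hij hj => hp i j hij (by omega))
        (fun i hi h => hdisj i (by omega) h.1) (fun z hz => h0 z hz.1) hk
      exact Nat.find_min hex hik ⟨hi0, by omega, hi⟩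
    refine ⟨k, by omega, fun z hz hzr => hk z ⟨hz, hzr⟩, fun hadj => ?_⟩
    obtain ⟨z, hz, hzn⟩ := hcon k hk0 hkn
    by_cases hzr : z = r
    · exact hzn (hzr ▸ hadj)
    · exact hzn (hk z ⟨hz, hzr⟩)
  obtain ⟨i, hi, hiT, his⟩ := hone s hs hsc
  obtain ⟨j, hj, hjT, hjt⟩ := hone t ht htc
  have hij : i ≠ j := by
    rintro rfl
    exact his (hjT s hs hts.symm)
  -- A long antihole is a long hole of the complement.
  have hanti : ∀ k, 5 ≤ k → ¬ Nonempty (cycleGraph k ↪g Gᶜ) := by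
    rintro k hk ⟨e⟩
    have e' := Embedding.complEquiv e
    rw [compl_compl] at e'
    exact (hwt k hk).2.false e'
  -- An induced path of the complement from `s` to `t` inside `T`, prolonged to `p i` and `p j`.
  obtain ⟨k, c, hc0, hck, hc, hcT⟩ := exists_isIndPath hconn hs ht
  have hk : 1 ≤ k := by
    by_contra! hk0
    obtain rfl : k = 0 := by omega
    exact hts (hck.symm.trans hc0)
  have hG : ∀ a b, a < b → b ≤ n → ((Gᶜ).Adj (p a) (p b) ↔ b ≠ a + 1) := by
    intro a b hab hb
    obtain ⟨h1, h2⟩ := hp a b hab hb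
    rw [compl_adj, h2]
    exact and_iff_right h1
  have hT' : ∀ a ≤ n, ∀ z ∈ T, ((Gᶜ).Adj z (p a) ↔ ¬ G.Adj (p a) z) := by
    intro a han z hz
    rw [compl_adj, G.adj_comm]
    exact and_iff_right (fun h => hdisj a han (h ▸ hz))
  have hne : ∀ a b, a ≠ b → a ≤ n → b ≤ n → p a ≠ p b := by
    intro a b hab ha hb
    rcases Nat.lt_or_gt_of_ne hab with h | h
    · exact (hp a b h hb).1
    · exact (hp b a h ha).1.symm
  have hin : i ≤ n := by omega
  have hjn : j ≤ n := by omega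
  obtain ⟨d, hd0, hd1, hd, hdT⟩ := hc.extend hcT (u := p i) (v := p j) (hdisj i hin)
    (hdisj j hjn) (hne i j hij hin hjn)
    (by
      rcases Nat.lt_or_gt_of_ne hij with h | h
      · rw [hG i j h hjn]; omega
      · rw [adj_comm, hG j i h hin]; omega)
    (by
      intro z hz
      rw [hT' i hin z hz, hc0]
      exact ⟨fun h => by_contra fun h' => h (hiT z hz h'), fun h => h ▸ his⟩)
    (by
      intro z hz
      rw [hT' j hjn z hz, hck]
      exact ⟨fun h => by_contra fun h' => h (hjT z hz h'), fun h => h ▸ hjt⟩)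
  have hcase : ∀ l ≤ k + 2, l = 0 ∧ d l = p i ∨ l = k + 2 ∧ d l = p j ∨
      0 < l ∧ l < k + 2 ∧ d l ∈ T := by
    intro l hl
    rcases Nat.eq_zero_or_pos l with rfl | h0
    · exact Or.inl ⟨rfl, hd0⟩
    · rcases Nat.eq_or_lt_of_le hl with rfl | h1
      · exact Or.inr (Or.inl ⟨rfl, hd1⟩)
      · exact Or.inr (Or.inr ⟨h0, h1, hdT l h0 h1⟩)
  by_cases hn4 : 4 ≤ n
  · -- `p n` misses `p 1` and `p 2`, so it closes the antipath.
    refine hanti _ (by omega) (hd.close (w := p n) ?_ ?_)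
    · intro l hl
      rcases hcase l hl with ⟨-, h⟩ | ⟨-, h⟩ | ⟨-, -, h⟩
      · rw [h]; exact hne _ _ (by omega) hin le_rfl
      · rw [h]; exact hne _ _ (by omega) hjn le_rfl
      · exact fun he => hdisj n le_rfl (he ▸ h)
    · intro l hl
      rcases hcase l hl with ⟨h0, h⟩ | ⟨h0, h⟩ | ⟨h0, h1, h⟩
      · rw [h, hG i n (by omega) le_rfl]; omega
      · rw [h, hG j n (by omega) le_rfl]; omega
      · rw [hT' n le_rfl _ h]
        exact ⟨fun h' => absurd (hend _ h) h', fun h' => by omega⟩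
  · -- `n = 3`: the two ends of the path, nonadjacent in `G`, close the antipath together.
    obtain rfl : n = 3 := by omega
    obtain ⟨a, b, hab⟩ : ∃ a b, (i = 1 ∧ j = 2 ∧ a = 0 ∧ b = 3) ∨
        (i = 2 ∧ j = 1 ∧ a = 3 ∧ b = 0) := by
      rcases hi with rfl | rfl <;> rcases hj with rfl | rfl <;> simp at hij ⊢
    have haT : ∀ z ∈ T, G.Adj (p a) z := by
      rcases hab with ⟨-, -, rfl, -⟩ | ⟨-, -, rfl, -⟩ <;> assumption
    have hbT : ∀ z ∈ T, G.Adj (p b) z := by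
      rcases hab with ⟨-, -, -, rfl⟩ | ⟨-, -, -, rfl⟩ <;> assumption
    have hia : ¬ (Gᶜ).Adj (p i) (p a) := by
      rcases hab with ⟨rfl, rfl, rfl, rfl⟩ | ⟨rfl, rfl, rfl, rfl⟩
      · rw [adj_comm, hG 0 1 (by omega) (by omega)]; omega
      · rw [hG 2 3 (by omega) (by omega)]; omega
    have hja : (Gᶜ).Adj (p j) (p a) := by
      rcases hab with ⟨rfl, rfl, rfl, rfl⟩ | ⟨rfl, rfl, rfl, rfl⟩
      · rw [adj_comm, hG 0 2 (by omega) (by omega)]; omega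
      · rw [hG 1 3 (by omega) (by omega)]; omega
    have hib : (Gᶜ).Adj (p i) (p b) := by
      rcases hab with ⟨rfl, rfl, rfl, rfl⟩ | ⟨rfl, rfl, rfl, rfl⟩
      · rw [hG 1 3 (by omega) (by omega)]; omega
      · rw [adj_comm, hG 0 2 (by omega) (by omega)]; omega
    have hjb : ¬ (Gᶜ).Adj (p j) (p b) := by
      rcases hab with ⟨rfl, rfl, rfl, rfl⟩ | ⟨rfl, rfl, rfl, rfl⟩
      · rw [hG 2 3 (by omega) (by omega)]; omega
      · rw [adj_comm, hG 0 1 (by omega) (by omega)]; omega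
    have hba : (Gᶜ).Adj (p a) (p b) := by
      rcases hab with ⟨rfl, rfl, rfl, rfl⟩ | ⟨rfl, rfl, rfl, rfl⟩
      · rw [hG 0 3 (by omega) (by omega)]; omega
      · rw [adj_comm, hG 0 3 (by omega) (by omega)]; omega
    have ha3 : a ≤ 3 := by omega
    have hb3 : b ≤ 3 := by omega
    have hd' := hd.snoc (w := p a) (by
      intro l hl
      rcases hcase l hl with ⟨-, h⟩ | ⟨-, h⟩ | ⟨-, -, h⟩
      · rw [h]; exact hne _ _ (by omega) hin ha3
      · rw [h]; exact hne _ _ (by omega) hjn ha3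
      · exact fun he => hdisj a ha3 (he ▸ h)) (by
      intro l hl
      rcases hcase l hl with ⟨h0, h⟩ | ⟨h0, h⟩ | ⟨h0, h1, h⟩
      · rw [h]; exact ⟨fun h' => absurd h' hia, fun h' => by omega⟩
      · rw [h]; exact ⟨fun _ => h0, fun _ => hja⟩
      · rw [hT' a ha3 _ h]
        exact ⟨fun h' => absurd (haT _ h) h', fun h' => by omega⟩)
    have hsn : ∀ l ≤ k + 2, snocSeq (k + 2) d (p a) l = d l := fun l hl => if_pos hl
    have hsn' : snocSeq (k + 2) d (p a) (k + 3) = p a := if_neg (by omega)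
    refine hanti _ (by omega) (hd'.close (w := p b) ?_ ?_)
    · intro l hl
      rcases Nat.eq_or_lt_of_le hl with rfl | hl
      · rw [hsn']; exact hba.ne
      rw [hsn l (by omega)]
      rcases hcase l (by omega) with ⟨-, h⟩ | ⟨-, h⟩ | ⟨-, -, h⟩
      · rw [h]; exact hib.ne
      · rw [h]; exact hne _ _ (by omega) hjn hb3
      · exact fun he => hdisj b hb3 (he ▸ h)
    · intro l hl
      rcases Nat.eq_or_lt_of_le hl with rfl | hl
      · rw [hsn']; exact ⟨fun _ => Or.inr rfl, fun _ => hba⟩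
      rw [hsn l (by omega)]
      rcases hcase l (by omega) with ⟨h0, h⟩ | ⟨h0, h⟩ | ⟨h0, h1, h⟩
      · rw [h]; exact ⟨fun _ => Or.inl h0, fun _ => hib⟩
      · rw [h]; exact ⟨fun h' => absurd h' hjb, fun h' => by omega⟩
      · rw [hT' b hb3 _ h]
        exact ⟨fun h' => absurd (hbT _ h) h', fun h' => by omega⟩

/-- Roussel–Rubio-type lemma for weakly triangulated graphs: if `P` is an induced path of
length at least 3 with ends `x, y`, and `T` is a set of vertices disjoint from `P` such that
`G[T]` is anticonnected and both ends of `P` are complete to `T`, then some interior vertex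
of `P` is complete to `T`. -/
theorem weaklyTriangulated_roussel_rubio {V : Type*} [Fintype V] (G : SimpleGraph V)
    (hwt : G.IsWeaklyTriangulated) (x y : V) (p : G.Walk x y) (hpath : p.IsPath)
    (hinduced : ∀ u w : V, u ∈ p.support → w ∈ p.support → G.Adj u w → s(u, w) ∈ p.edges)
    (hlen : 3 ≤ p.length) (T : Set V)
    (hdisj : Disjoint T {v | v ∈ p.support})
    (hanticonn : ((G.induce T)ᶜ).Connected)
    (hx : ∀ t ∈ T, G.Adj x t) (hy : ∀ t ∈ T, G.Adj y t) :
    ∃ v ∈ p.support, v ≠ x ∧ v ≠ y ∧ ∀ t ∈ T, G.Adj v t := by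
  have hinj := hpath.getVert_injOn
  have hconn : (Gᶜ.induce T).Connected := by
    refine hanticonn.mono ?_
    intro a b hab
    rw [compl_adj] at hab
    exact (compl_adj _ _ _).2 ⟨fun h => hab.1 (Subtype.ext h), hab.2⟩
  have hp : IsIndPath G p.length p.getVert := by
    intro i j hij hj
    refine ⟨fun he => ?_, fun hadj => ?_, ?_⟩
    · have := hinj (show i ≤ p.length by omega) hj he
      omega
    · obtain ⟨l, hl, he⟩ := p.mk_mem_edges_iff_exists.1
        (hinduced _ _ (p.getVert_mem_support i) (p.getVert_mem_support j) hadj)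
      rcases Sym2.eq_iff.1 he with ⟨h1, h2⟩ | ⟨h1, h2⟩
      · have e1 := hinj (show l ≤ p.length by omega) (show i ≤ p.length by omega) h1
        have e2 := hinj (show l + 1 ≤ p.length by omega) hj h2
        omega
      · have e1 := hinj (show l ≤ p.length by omega) hj h1
        have e2 := hinj (show l + 1 ≤ p.length by omega) (show i ≤ p.length by omega) h2
        omega
    · rintro rfl
      exact p.adj_getVert_succ (by omega)
  obtain ⟨i, hi0, hil, hi⟩ := exists_complete_of_isIndPath hwt _ T T.toFinite rfl hconn
    p.length p.getVert hlen hp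
    (fun i _ h => Set.disjoint_left.1 hdisj h (p.getVert_mem_support i))
    (by simpa using hx) (by simpa using hy)
  refine ⟨p.getVert i, p.getVert_mem_support i, ?_, ?_, hi⟩
  · simpa using (hp 0 i hi0 hil.le).1.symm
  · simpa using (hp i p.length hil le_rfl).1
end
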